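/- Let h ≥ 1 and let x_1, …, x_h be real numbers with 0 < x_i < 1 for all i. Then Σ over all espaliers P of height h of x_1^{|P_0|} x_2^{|P_1|} ⋯ x_h^{|P_{h−1}|} equals Σ_{n_1 ≥ n_2 ≥ … ≥ n_h ≥ 1} (x_1^{n_1} x_2^{n_2} ⋯ x_h^{n_h}) / ((1 − x_1^{n_1})(1 − x_1^{n_1} x_2^{n_2}) ⋯ (1 − x_1^{n_1} ⋯ x_h^{n_h})), both sums converging. -/

import Mathlib

/-!
The slices of an espalier of height `h` are the rectangles `[0, m_a) × [0, n_a)` for two weakly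
decreasing sequences `m, n` of positive integers, and every pair of such sequences occurs
(`rectStack_bijective`). So the left-hand side is `∑_n ∑_m ∏ i, x_i ^ (m_i n_i)`.

For fixed `n`, a weakly decreasing `m` is given by its successive differences, that is
`m_i = 1 + ∑_{j ≥ i} d_j` with arbitrary `d : Fin h → ℕ` (`ofDiffs_bijective`). With
`y_j = ∏_{i ≤ j} x_i ^ n_i` the weight becomes `(∏ i, x_i ^ n_i) * ∏ j, y_j ^ d_j`, so the sum
over `m` is a product of geometric series (`hasSum_antitone`), which is the summand on the right.
As all terms are nonnegative, it only remains to check that the right-hand side converges; it is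
dominated by `∏ i, x_i ^ n_i / (1 - x_i)`, again a product of geometric series.
-/

/-- The `a`-th horizontal slice of a finite set of cells in `ℕ × ℤ × ℤ`. -/
def polySlice (P : Finset (ℕ × ℤ × ℤ)) (a : ℕ) : Finset (ℤ × ℤ) :=
  (P.filter fun q => q.1 = a).image fun q => q.2

/-- A plateau: the product of two nonempty finite integer intervals. -/
def IsPlateau (S : Finset (ℤ × ℤ)) : Prop :=
  ∃ a b c d : ℤ, a ≤ b ∧ c ≤ d ∧ S = Finset.Icc a b ×ˢ Finset.Icc c d

/-- A pyramid of height `h`. -/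
def IsPyramid (h : ℕ) (P : Finset (ℕ × ℤ × ℤ)) : Prop :=
  (∀ a : ℕ, (polySlice P a).Nonempty ↔ a < h) ∧
  (∀ a : ℕ, a < h → IsPlateau (polySlice P a)) ∧
  (∀ (a : ℕ) (b c : ℤ), (a + 1, b, c) ∈ P → (a, b, c) ∈ P) ∧
  (∀ b c : ℤ, ((0 : ℕ), b, c) ∈ P → 0 ≤ b ∧ 0 ≤ c) ∧
  ((0 : ℕ), (0 : ℤ), (0 : ℤ)) ∈ P

/-- An espalier of height `h`: a pyramid all of whose plateaus contain `(0,0)`. -/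
def IsEspalier (h : ℕ) (P : Finset (ℕ × ℤ × ℤ)) : Prop :=
  IsPyramid h P ∧ ∀ a : ℕ, a < h → (a, (0 : ℤ), (0 : ℤ)) ∈ P

open Finset

/-! ### Products of geometric series -/

lemma hasSum_of_eq {ι : Type*} {f g : ι → ℝ} {a : ℝ} (hf : HasSum f a) (hfg : ∀ i, g i = f i) :
    HasSum g a :=
  (funext hfg : g = f) ▸ hf

/-- The product of finitely many geometric series, as a sum over all exponent vectors. -/
lemma hasSum_prod_geometric (h : ℕ) (y : Fin h → ℝ) (hy0 : ∀ i, 0 ≤ y i) (hy1 : ∀ i, y i < 1) :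
    HasSum (fun d : Fin h → ℕ => ∏ i, y i ^ d i) (∏ i, (1 - y i)⁻¹) := by
  induction h with
  | zero => simp
  | succ k ih =>
    have h1 := hasSum_geometric_of_lt_one (hy0 0) (hy1 0)
    have h2 := ih (fun i => y i.succ) (fun i => hy0 _) (fun i => hy1 _)
    have hs : Summable fun p : ℕ × (Fin k → ℕ) => y 0 ^ p.1 * ∏ i, y i.succ ^ p.2 i :=
      Summable.mul_of_nonneg (f := fun a : ℕ => y 0 ^ a)
        (g := fun d : Fin k → ℕ => ∏ i, y i.succ ^ d i) h1.summable h2.summable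
        (fun a => pow_nonneg (hy0 0) a)
        (fun d => prod_nonneg fun i _ => pow_nonneg (hy0 _) _)
    have h3 := HasSum.mul (f := fun a : ℕ => y 0 ^ a)
      (g := fun d : Fin k → ℕ => ∏ i, y i.succ ^ d i) h1 h2 hs
    rw [Fin.prod_univ_succ]
    rw [← (Fin.consEquiv (fun _ : Fin (k + 1) => ℕ)).hasSum_iff]
    refine hasSum_of_eq h3 ?_
    intro p
    simp [Fin.prod_univ_succ, Fin.consEquiv]

/-! ### Weakly decreasing sequences and their differences -/

/-- The weakly decreasing sequence `m_i = 1 + ∑_{j ≥ i} d_j` of positive integers: `d`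
lists its successive differences, the last entry being `m_{h-1} - 1`. -/
def ofDiffs {h : ℕ} (d : Fin h → ℕ) : {m : Fin h → ℕ+ // Antitone m} :=
  ⟨fun i => ⟨1 + ∑ j ∈ Ici i, d j, by omega⟩, fun i i' hi => by
    exact PNat.coe_le_coe _ _ |>.1 (Nat.add_le_add_left
      (sum_le_sum_of_subset (f := d) (Ici_subset_Ici.2 hi)) 1)⟩

lemma sum_Ici_eq {h : ℕ} (d : Fin h → ℕ) (i : Fin h) :
    ∑ j ∈ Ici i, d j = d i + ∑ j ∈ Ioi i, d j := by
  rw [← Ioi_insert, sum_insert (by simp)]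

lemma Ioi_eq_Ici {h : ℕ} (i : Fin h) (hi : (i : ℕ) + 1 < h) :
    Ioi i = Ici (⟨i + 1, hi⟩ : Fin h) := by
  ext j
  rw [mem_Ioi, mem_Ici, Fin.lt_def, Fin.le_def, Nat.succ_le_iff]

lemma Ioi_eq_empty {h : ℕ} (i : Fin h) (hi : ¬ (i : ℕ) + 1 < h) : Ioi i = ∅ := by
  ext j
  rw [mem_Ioi, Fin.lt_def]
  simp only [notMem_empty, iff_false]
  omega

lemma ofDiffs_bijective (h : ℕ) : Function.Bijective (ofDiffs (h := h)) := by
  constructor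
  · intro d d' hd
    have key : ∀ i, ∑ j ∈ Ici i, d j = ∑ j ∈ Ici i, d' j := by
      intro i
      have := congrArg (fun m => ((m.1 i : ℕ+) : ℕ)) hd
      simpa [ofDiffs] using this
    funext i
    have h1 := key i
    rw [sum_Ici_eq, sum_Ici_eq] at h1
    by_cases hi : (i : ℕ) + 1 < h
    · rw [Ioi_eq_Ici i hi, key] at h1
      omega
    · simpa [Ioi_eq_empty i hi] using h1
  · rintro ⟨m, hm⟩
    let d : Fin h → ℕ := fun i =>
      if hi : (i : ℕ) + 1 < h then (m i : ℕ) - (m ⟨i + 1, hi⟩ : ℕ) else (m i : ℕ) - 1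
    -- telescoping, by induction on the distance `k` from the end
    have key : ∀ k : ℕ, ∀ i : Fin h, (i : ℕ) + 1 + k = h → 1 + ∑ j ∈ Ici i, d j = (m i : ℕ) := by
      intro k
      induction k with
      | zero =>
        intro i hi
        have hi' : ¬ (i : ℕ) + 1 < h := by omega
        have := (m i).pos
        rw [sum_Ici_eq, Ioi_eq_empty i hi']
        simp only [d, dif_neg hi', sum_empty]
        omega
      | succ k ih =>
        intro i hi
        have hi' : (i : ℕ) + 1 < h := by omega
        have h1 := ih ⟨i + 1, hi'⟩ (by simp; omega)
        have h2 : (m ⟨i + 1, hi'⟩ : ℕ) ≤ m i := hm (by simp [Fin.le_def])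
        rw [sum_Ici_eq, Ioi_eq_Ici i hi']
        have h3 : d i = (m i : ℕ) - (m ⟨i + 1, hi'⟩ : ℕ) := by simp only [d, dif_pos hi']
        omega
    refine ⟨d, Subtype.ext (funext fun i => PNat.coe_injective ?_)⟩
    exact key (h - (i + 1)) i (by omega)

/-- The sum over weakly decreasing `m` of `∏ i, z_i ^ m_i` is a product of geometric series in the
partial products of `z`. It is applied to `z_i = x_i ^ n_i`. -/
lemma hasSum_antitone (h : ℕ) (z : Fin h → ℝ) (hz0 : ∀ i, 0 ≤ z i)
    (hz1 : ∀ i, ∏ j ∈ Iic i, z j < 1) :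
    HasSum (fun m : {m : Fin h → ℕ+ // Antitone m} => ∏ i, z i ^ (m.1 i : ℕ))
      ((∏ i, z i) / ∏ i, (1 - ∏ j ∈ Iic i, z j)) := by
  rw [← (Equiv.ofBijective _ (ofDiffs_bijective h)).hasSum_iff, div_eq_mul_inv, ← prod_inv_distrib]
  refine hasSum_of_eq ((hasSum_prod_geometric h (fun i => ∏ j ∈ Iic i, z j)
    (fun i => prod_nonneg fun j _ => hz0 j) hz1).mul_left (∏ i, z i)) ?_
  intro d
  simp only [Function.comp, Equiv.ofBijective_apply, ofDiffs, PNat.mk_coe, pow_add, pow_one,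
    prod_mul_distrib]
  congr 1
  simp only [← prod_pow_eq_pow_sum, ← prod_pow]
  exact prod_comm' (by simp)

/-! ### Espaliers as pairs of weakly decreasing sequences -/

/-- The stack of rectangles `[0, m_a) × [0, n_a)`, for `0 ≤ a < h`. -/
noncomputable def rectStack {h : ℕ} (n m : Fin h → ℕ+) : Finset (ℕ × ℤ × ℤ) :=
  univ.biUnion fun i : Fin h =>
    {(i : ℕ)} ×ˢ (Icc 0 ((m i : ℤ) - 1) ×ˢ Icc 0 ((n i : ℤ) - 1))

lemma mem_polySlice (P : Finset (ℕ × ℤ × ℤ)) (a : ℕ) (q : ℤ × ℤ) :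
    q ∈ polySlice P a ↔ (a, q) ∈ P := by
  simp [polySlice]

lemma mem_rectStack {h : ℕ} (n m : Fin h → ℕ+) (a : ℕ) (b c : ℤ) :
    (a, b, c) ∈ rectStack n m ↔
      ∃ ha : a < h, (0 ≤ b ∧ b < m ⟨a, ha⟩) ∧ (0 ≤ c ∧ c < n ⟨a, ha⟩) := by
  simp only [rectStack, mem_biUnion, mem_univ, true_and, mem_product, mem_singleton, mem_Icc,
    Int.le_sub_one_iff]
  constructor
  · rintro ⟨i, rfl, hi⟩
    exact ⟨i.2, hi⟩
  · rintro ⟨ha, hi⟩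
    exact ⟨⟨a, ha⟩, rfl, hi⟩

lemma polySlice_rectStack {h : ℕ} (n m : Fin h → ℕ+) (i : Fin h) :
    polySlice (rectStack n m) i = Icc 0 ((m i : ℤ) - 1) ×ˢ Icc 0 ((n i : ℤ) - 1) := by
  ext ⟨b, c⟩
  simp [mem_polySlice, mem_rectStack]

lemma rectStack_isEspalier {h : ℕ} (hh : 1 ≤ h) (n m : Fin h → ℕ+) (hn : Antitone n)
    (hm : Antitone m) : IsEspalier h (rectStack n m) := by
  have hz : ∀ a : ℕ, a < h → (a, (0 : ℤ), (0 : ℤ)) ∈ rectStack n m := fun a ha => by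
    simp [mem_rectStack, ha]
  refine ⟨⟨fun a => ⟨?_, fun ha => ⟨(0, 0), ?_⟩⟩, fun a ha => ?_, ?_, ?_, hz 0 hh⟩, hz⟩
  · rintro ⟨⟨b, c⟩, hq⟩
    rw [mem_polySlice, mem_rectStack] at hq
    exact hq.1
  · rw [mem_polySlice]
    exact hz a ha
  · have h1 := (m ⟨a, ha⟩).pos
    have h2 := (n ⟨a, ha⟩).pos
    exact ⟨_, _, _, _, by omega, by omega, polySlice_rectStack n m ⟨a, ha⟩⟩
  · intro a b c hq
    rw [mem_rectStack] at hq ⊢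
    obtain ⟨ha, hb, hc⟩ := hq
    have hle : (⟨a, by omega⟩ : Fin h) ≤ ⟨a + 1, ha⟩ := by simp [Fin.le_def]
    have h1 : (m ⟨a + 1, ha⟩ : ℕ) ≤ m ⟨a, by omega⟩ := hm hle
    have h2 : (n ⟨a + 1, ha⟩ : ℕ) ≤ n ⟨a, by omega⟩ := hn hle
    exact ⟨by omega, by omega, by omega⟩
  · intro b c hq
    rw [mem_rectStack] at hq
    obtain ⟨_, hb, hc⟩ := hq
    exact ⟨hb.1, hc.1⟩

/-- `rectStack` as a map from pairs of weakly decreasing sequences to espaliers. -/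
noncomputable def toEspalier {h : ℕ} (hh : 1 ≤ h)
    (p : {n : Fin h → ℕ+ // Antitone n} × {m : Fin h → ℕ+ // Antitone m}) :
    {P : Finset (ℕ × ℤ × ℤ) // IsEspalier h P} :=
  ⟨rectStack p.1.1 p.2.1, rectStack_isEspalier hh _ _ p.1.2 p.2.2⟩

/-- Each slice of an espalier is a rectangle with lower corner the origin: it is a plateau that
contains the origin and lies over the bottom slice, hence in the positive quadrant. -/
lemma IsEspalier.exists_rect {h : ℕ} {P : Finset (ℕ × ℤ × ℤ)} (hP : IsEspalier h P) (i : Fin h) :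
    ∃ m n : ℕ+, ∀ b c : ℤ, ((i : ℕ), b, c) ∈ P ↔ (0 ≤ b ∧ b < m) ∧ (0 ≤ c ∧ c < n) := by
  obtain ⟨⟨-, hplat, hdown, hnn, -⟩, hz⟩ := hP
  have hbot : ∀ (a : ℕ) (b c : ℤ), (a, b, c) ∈ P → (0, b, c) ∈ P := by
    intro a
    induction a with
    | zero => exact fun b c hq => hq
    | succ a ih => exact fun b c hq => ih b c (hdown a b c hq)
  obtain ⟨a₁, b₁, c₁, d₁, hab, hcd, hS⟩ := hplat i i.2
  have hmem : ∀ b c : ℤ, ((i : ℕ), b, c) ∈ P ↔ (a₁ ≤ b ∧ b ≤ b₁) ∧ (c₁ ≤ c ∧ c ≤ d₁) := by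
    intro b c
    rw [← mem_polySlice, hS]
    simp
  have h0 := (hmem 0 0).1 (hz i i.2)
  have h1 := hnn _ _ (hbot _ _ _ ((hmem a₁ c₁).2 (by omega)))
  refine ⟨⟨(b₁ + 1).toNat, by omega⟩, ⟨(d₁ + 1).toNat, by omega⟩, fun b c => ?_⟩
  rw [hmem]
  simp only [PNat.mk_coe]
  omega

lemma rectStack_bijective {h : ℕ} (hh : 1 ≤ h) : Function.Bijective (toEspalier hh) := by
  constructor
  · rintro ⟨⟨n, hn⟩, ⟨m, hm⟩⟩ ⟨⟨n', hn'⟩, ⟨m', hm'⟩⟩ heq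
    have hP : rectStack n m = rectStack n' m' := congrArg Subtype.val heq
    have key : ∀ i : Fin h, m i = m' i ∧ n i = n' i := by
      intro i
      have hmem : ∀ b c : ℤ, ((0 ≤ b ∧ b < m i) ∧ (0 ≤ c ∧ c < n i)) ↔
          ((0 ≤ b ∧ b < m' i) ∧ (0 ≤ c ∧ c < n' i)) := by
        intro b c
        have := mem_rectStack n m i b c
        rw [hP, mem_rectStack] at this
        simpa using this.symm
      have p1 := (m i).pos
      have p2 := (m' i).pos
      have p3 := (n i).pos
      have p4 := (n' i).pos
      have e1 := hmem (m i - 1) 0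
      have e2 := hmem (m' i - 1) 0
      have e3 := hmem 0 (n i - 1)
      have e4 := hmem 0 (n' i - 1)
      exact ⟨PNat.coe_injective (by omega), PNat.coe_injective (by omega)⟩
    obtain rfl : m = m' := funext fun i => (key i).1
    obtain rfl : n = n' := funext fun i => (key i).2
    rfl
  · rintro ⟨P, hP⟩
    choose m n hmn using hP.exists_rect
    have hdown : ∀ (k a : ℕ) (b c : ℤ), (a + k, b, c) ∈ P → (a, b, c) ∈ P := by
      intro k
      induction k with
      | zero => exact fun a b c hq => hq
      | succ k ih => exact fun a b c hq => ih a b c (hP.1.2.2.1 _ _ _ hq)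
    have hanti : ∀ i j : Fin h, i ≤ j → m j ≤ m i ∧ n j ≤ n i := by
      intro i j hij
      have hsub : ∀ b c : ℤ, (0 ≤ b ∧ b < m j) ∧ (0 ≤ c ∧ c < n j) →
          (0 ≤ b ∧ b < m i) ∧ (0 ≤ c ∧ c < n i) := by
        intro b c hq
        rw [← hmn] at hq ⊢
        refine hdown (j - i) i b c ?_
        rwa [Nat.add_sub_cancel' hij]
      have p1 := (m j).pos
      have p2 := (n j).pos
      have e := hsub (m j - 1) (n j - 1) (by omega)
      rw [← PNat.coe_le_coe, ← PNat.coe_le_coe]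
      omega
    refine ⟨(⟨n, fun i j hij => (hanti i j hij).2⟩, ⟨m, fun i j hij => (hanti i j hij).1⟩),
      Subtype.ext ?_⟩
    ext ⟨a, b, c⟩
    simp only [toEspalier, mem_rectStack]
    constructor
    · rintro ⟨ha, hq⟩
      exact (hmn ⟨a, ha⟩ b c).2 hq
    · intro hq
      have ha : a < h := (hP.1.1 a).1 ⟨(b, c), (mem_polySlice _ _ _).2 hq⟩
      exact ⟨ha, (hmn ⟨a, ha⟩ b c).1 hq⟩

/-! ### The generating function -/

theorem genfun_espaliers (h : ℕ) (hh : 1 ≤ h) (x : Fin h → ℝ)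
    (hx0 : ∀ i, 0 < x i) (hx1 : ∀ i, x i < 1) :
    (Summable fun P : {P : Finset (ℕ × ℤ × ℤ) // IsEspalier h P} =>
      ∏ i : Fin h, x i ^ (polySlice P.1 (i : ℕ)).card) ∧
    (Summable fun n : {n : Fin h → ℕ+ // Antitone n} =>
      (∏ i : Fin h, x i ^ ((n.1 i : ℕ))) /
        ∏ i : Fin h, (1 - ∏ j ∈ Finset.Iic i, x j ^ ((n.1 j : ℕ)))) ∧
    (∑' P : {P : Finset (ℕ × ℤ × ℤ) // IsEspalier h P},
        ∏ i : Fin h, x i ^ (polySlice P.1 (i : ℕ)).card) =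
      ∑' n : {n : Fin h → ℕ+ // Antitone n},
        (∏ i : Fin h, x i ^ ((n.1 i : ℕ))) /
          ∏ i : Fin h, (1 - ∏ j ∈ Finset.Iic i, x j ^ ((n.1 j : ℕ))) := by
  have hz0 : ∀ (n : Fin h → ℕ+) (i : Fin h), 0 ≤ x i ^ (n i : ℕ) :=
    fun n i => pow_nonneg (hx0 i).le _
  have hz1 : ∀ (n : Fin h → ℕ+) (i : Fin h), x i ^ (n i : ℕ) ≤ x i :=
    fun n i => pow_le_of_le_one (hx0 i).le (hx1 i).le (n i).pos.ne'
  have hy : ∀ (n : Fin h → ℕ+) (i : Fin h), ∏ j ∈ Iic i, x j ^ (n j : ℕ) ≤ x i := by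
    intro n i
    rw [← mul_prod_erase _ _ (mem_Iic.2 le_rfl)]
    exact (mul_le_of_le_one_right (hz0 n i) (prod_le_one (fun j _ => hz0 n j)
      fun j _ => (hz1 n j).trans (hx1 j).le)).trans (hz1 n i)
  have hinner := fun n : {n : Fin h → ℕ+ // Antitone n} =>
    hasSum_antitone h (fun i => x i ^ (n.1 i : ℕ)) (hz0 n.1) fun i => (hy n.1 i).trans_lt (hx1 i)
  have houter : Summable fun n : {n : Fin h → ℕ+ // Antitone n} =>
      (∏ i : Fin h, x i ^ ((n.1 i : ℕ))) /
        ∏ i : Fin h, (1 - ∏ j ∈ Finset.Iic i, x j ^ ((n.1 j : ℕ))) := by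
    have hinj : Function.Injective
        (fun (n : {n : Fin h → ℕ+ // Antitone n}) (i : Fin h) => (n.1 i : ℕ)) := by
      intro n n' hnn
      exact Subtype.ext (funext fun i => PNat.coe_injective (congrFun hnn i))
    have hs := ((hasSum_prod_geometric h x (fun i => (hx0 i).le) hx1).summable.comp_injective
      hinj).div_const (∏ i, (1 - x i))
    refine Summable.of_nonneg_of_le (fun n => ?_) (fun n => ?_) hs
    · exact div_nonneg (prod_nonneg fun i _ => hz0 n.1 i)
        (prod_nonneg fun i _ => sub_nonneg.2 ((hy n.1 i).trans (hx1 i).le))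
    · exact div_le_div_of_nonneg_left (prod_nonneg fun i _ => hz0 n.1 i)
        (prod_pos fun i _ => sub_pos.2 (hx1 i))
        (prod_le_prod (fun i _ => (sub_pos.2 (hx1 i)).le)
          fun i _ => sub_le_sub_left (hy n.1 i) 1)
  have hpair : Summable fun p : {n : Fin h → ℕ+ // Antitone n} × {m : Fin h → ℕ+ // Antitone m} =>
      ∏ i, (x i ^ (p.1.1 i : ℕ)) ^ (p.2.1 i : ℕ) := by
    refine (summable_prod_of_nonneg fun p =>
      prod_nonneg fun i _ => pow_nonneg (hz0 p.1.1 i) _).2 ⟨fun n => (hinner n).summable, ?_⟩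
    exact houter.congr fun n => (hinner n).tsum_eq.symm
  have hcongr : ∀ p, ∏ i, (x i ^ (p.1.1 i : ℕ)) ^ (p.2.1 i : ℕ) =
      ∏ i : Fin h, x i ^ (polySlice (toEspalier hh p).1 (i : ℕ)).card := by
    intro p
    refine prod_congr rfl fun i _ => ?_
    simp only [toEspalier]
    rw [polySlice_rectStack, card_product, ← pow_mul, mul_comm]
    simp
  let e := Equiv.ofBijective _ (rectStack_bijective hh)
  refine ⟨?_, houter, ?_⟩
  · rw [← e.summable_iff]
    exact hpair.congr fun p => hcongr p
  · rw [← e.tsum_eq]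
    calc _ = ∑' p : {n : Fin h → ℕ+ // Antitone n} × {m : Fin h → ℕ+ // Antitone m},
          ∏ i, (x i ^ (p.1.1 i : ℕ)) ^ (p.2.1 i : ℕ) := tsum_congr fun p => (hcongr p).symm
      _ = ∑' n : {n : Fin h → ℕ+ // Antitone n}, ∑' m : {m : Fin h → ℕ+ // Antitone m},
          ∏ i, (x i ^ (n.1 i : ℕ)) ^ (m.1 i : ℕ) := hpair.tsum_prod
      _ = _ := tsum_congr fun n => (hinner n).tsum_eq
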